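/- arXiv:2407.02601 — 10 statements merged into one kernel-verified Lean document; each statement's English description precedes it below -/
import Mathlib

section
/- Let U be a finite set and f : Finset U → ℝ be monotone and submodular. Then for all S, T ⊆ U one has f(T) ≤ f(S) + ∑_{o ∈ T \ S} (f(S ∪ {o}) − f(S)). -/
/-- For a monotone submodular function `f` and any sets `S, T`,
`f T ≤ f S + ∑_{o ∈ T \ S} (f (S ∪ {o}) - f S)`. -/
theorem monotone_submodular_marginal_bound
    {U : Type*} [Fintype U] [DecidableEq U]
    (f : Finset U → ℝ)
    (hmono : ∀ X Y : Finset U, X ⊆ Y → f X ≤ f Y)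
    (hsub : ∀ X Y : Finset U, X ⊆ Y → ∀ x ∉ Y,
      f (insert x X) - f X ≥ f (insert x Y) - f Y)
    (S T : Finset U) :
    f T ≤ f S + ∑ o ∈ T \ S, (f (insert o S) - f S) := by
  have key : ∀ A : Finset U, Disjoint A S →
      f (S ∪ A) ≤ f S + ∑ o ∈ A, (f (insert o S) - f S) := by
    intro A
    induction A using Finset.induction_on with
    | empty => intro _; simp
    | insert a A ha ih =>
      intro hd
      rw [Finset.disjoint_insert_left] at hd
      have h1 := ih hd.2
      have h2 := hsub S (S ∪ A) Finset.subset_union_left a (by simp [hd.1, ha])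
      rw [Finset.sum_insert ha, Finset.union_insert]
      linarith
  have h1 := key (T \ S) Finset.sdiff_disjoint
  have h2 := hmono T (S ∪ T \ S) (by intro x hx; by_cases h : x ∈ S <;> simp [h, hx])
  linarith
end

section
/- Let U be a nonempty finite set, f : Finset U → ℝ monotone and submodular, κ ≥ 1 a natural number, OPT ⊆ U with |OPT| ≤ κ, ε' ≥ 0, S ⊆ U, and a ∈ U an element satisfying Δf(S,a) ≥ max_{x ∈ U} Δf(S,x) − ε'. Then f(S ∪ {a}) ≥ f(S) + (f(OPT) − f(S))/κ − ε'. -/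
/-- If `a` has marginal gain within `ε'` of the maximum marginal gain over
all elements, then `f (S ∪ {a}) ≥ f S + (f OPT - f S)/κ - ε'`. -/
theorem greedy_step_gain
    {U : Type*} [Fintype U] [DecidableEq U] [Nonempty U]
    (f : Finset U → ℝ)
    (hmono : ∀ X Y : Finset U, X ⊆ Y → f X ≤ f Y)
    (hsub : ∀ X Y : Finset U, X ⊆ Y → ∀ x ∉ Y,
      f (insert x X) - f X ≥ f (insert x Y) - f Y)
    (κ : ℕ) (hκ : 1 ≤ κ)
    (OPT : Finset U) (hOPT : OPT.card ≤ κ)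
    (ε' : ℝ) (hε' : 0 ≤ ε')
    (S : Finset U) (a : U)
    (ha : f (insert a S) - f S ≥
      Finset.univ.sup' Finset.univ_nonempty (fun x => f (insert x S) - f S) - ε') :
    f (insert a S) ≥ f S + (f OPT - f S) / κ - ε' := by
  set M := Finset.univ.sup' Finset.univ_nonempty (fun x => f (insert x S) - f S) with hM
  have hle : ∀ x, f (insert x S) - f S ≤ M := fun x =>
    Finset.le_sup' (fun x => f (insert x S) - f S) (Finset.mem_univ x)
  have hM0 : 0 ≤ M := by
    have h1 := hle a
    have h2 := hmono S (insert a S) (Finset.subset_insert a S)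
    linarith
  have key : ∀ T : Finset U, f (S ∪ T) ≤ f S + T.card * M := by
    intro T
    induction T using Finset.induction_on with
    | empty => simp
    | insert x T hx ih =>
      rw [Finset.card_insert_of_notMem hx, Finset.union_insert]
      push_cast
      by_cases hxS : x ∈ S ∪ T
      · rw [Finset.insert_eq_of_mem hxS]
        linarith
      · have h1 := hsub S (S ∪ T) Finset.subset_union_left x hxS
        have h2 := hle x
        linarith
  have h1 := key OPT
  have h2 := hmono OPT (S ∪ OPT) Finset.subset_union_right
  have h3 : (OPT.card : ℝ) * M ≤ κ * M :=
    mul_le_mul_of_nonneg_right (by exact_mod_cast hOPT) hM0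
  have hκ' : (0 : ℝ) < κ := by exact_mod_cast hκ
  have h4 : (f OPT - f S) / κ ≤ M := by
    rw [div_le_iff₀ hκ']
    linarith
  linarith
end

section
/- Let U be a nonempty finite set, f : Finset U → ℝ monotone and submodular with f(∅) = 0, κ ≥ 1 a natural number, ε ≥ 0, and OPT ⊆ U with |OPT| ≤ κ. Suppose S_0 = ∅ and for each i < κ, S_{i+1} = S_i ∪ {a_i} where a_i ∈ U satisfies Δf(S_i, a_i) ≥ max_{x ∈ U} Δf(S_i, x) − ε/κ. Then f(S_κ) ≥ (1 − e^{−1}) · f(OPT) − ε. -/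
/-- Deterministic core of the greedy guarantee: if each of the `κ` greedy
steps adds an element whose marginal gain is within `ε/κ` of the maximum marginal gain,
then `f (S κ) ≥ (1 - e⁻¹) · f OPT - ε`. -/
theorem approx_greedy_guarantee
    {U : Type*} [Fintype U] [DecidableEq U] [Nonempty U]
    (f : Finset U → ℝ)
    (hmono : ∀ X Y : Finset U, X ⊆ Y → f X ≤ f Y)
    (hsub : ∀ X Y : Finset U, X ⊆ Y → ∀ x ∉ Y,
      f (insert x X) - f X ≥ f (insert x Y) - f Y)
    (hf0 : f ∅ = 0)
    (κ : ℕ) (hκ : 1 ≤ κ)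
    (ε : ℝ) (hε : 0 ≤ ε)
    (OPT : Finset U) (hOPT : OPT.card ≤ κ)
    (S : ℕ → Finset U) (a : ℕ → U)
    (hS0 : S 0 = ∅)
    (hstep : ∀ i < κ, S (i + 1) = insert (a i) (S i))
    (hgreedy : ∀ i < κ, f (insert (a i) (S i)) - f (S i) ≥
      Finset.univ.sup' Finset.univ_nonempty (fun x => f (insert x (S i)) - f (S i)) - ε / κ) :
    f (S κ) ≥ (1 - Real.exp (-1)) * f OPT - ε := by
  have hk : (0 : ℝ) < κ := by exact_mod_cast hκ
  have key : ∀ (A : Finset U) (M : ℝ), 0 ≤ M → (∀ x, f (insert x A) - f A ≤ M) →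
      ∀ T : Finset U, f (A ∪ T) ≤ f A + T.card * M := by
    intro A M hM hA T
    induction T using Finset.induction_on with
    | empty => simp
    | insert x T hx ih =>
      rw [Finset.card_insert_of_notMem hx, Finset.union_insert]
      push_cast
      by_cases h : x ∈ A ∪ T
      · rw [Finset.insert_eq_of_mem h]
        linarith
      · have h1 := hsub A (A ∪ T) Finset.subset_union_left x h
        have h2 := hA x
        linarith
  have step : ∀ i < κ, f OPT - f (S (i + 1)) ≤ (1 - 1 / κ) * (f OPT - f (S i)) + ε / κ := by
    intro i hi
    have hg := hgreedy i hi
    rw [hstep i hi]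
    set M := Finset.univ.sup' Finset.univ_nonempty (fun x => f (insert x (S i)) - f (S i)) with hMdef
    have hle : ∀ x, f (insert x (S i)) - f (S i) ≤ M := fun x =>
      Finset.le_sup' (fun x => f (insert x (S i)) - f (S i)) (Finset.mem_univ x)
    have hM : 0 ≤ M := by
      have h1 := hle (a i)
      have h2 := hmono (S i) (insert (a i) (S i)) (Finset.subset_insert _ _)
      linarith
    have h1 := key (S i) M hM hle OPT
    have h2 := hmono OPT (S i ∪ OPT) Finset.subset_union_right
    have h3 : (OPT.card : ℝ) * M ≤ κ * M :=
      mul_le_mul_of_nonneg_right (by exact_mod_cast hOPT) hM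
    have h4 : (f OPT - f (S i)) / κ ≤ M := by
      rw [div_le_iff₀ hk]
      linarith
    have h5 : (1 - 1 / (κ : ℝ)) * (f OPT - f (S i))
        = (f OPT - f (S i)) - (f OPT - f (S i)) / κ := by ring
    linarith
  have hr0 : (0 : ℝ) ≤ 1 - 1 / κ := by
    have : 1 / (κ : ℝ) ≤ 1 := by
      rw [div_le_one hk]
      exact_mod_cast hκ
    linarith
  have hr1 : 1 - 1 / (κ : ℝ) ≤ 1 := by
    have : 0 ≤ 1 / (κ : ℝ) := by positivity
    linarith
  have inv : ∀ i ≤ κ, f OPT - f (S i) ≤ (1 - 1 / (κ : ℝ)) ^ i * f OPT + i * (ε / κ) := by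
    intro i
    induction i with
    | zero => simp [hS0, hf0]
    | succ i ih =>
      intro hi
      have h1 := step i hi
      have h2 := mul_le_mul_of_nonneg_left (ih (by omega)) hr0
      have h3 : (1 - 1 / (κ : ℝ)) * (i * (ε / κ)) ≤ i * (ε / κ) :=
        mul_le_of_le_one_left (by positivity) hr1
      rw [pow_succ]
      push_cast
      linarith
  have hfin := inv κ le_rfl
  have hexp : (1 - 1 / (κ : ℝ)) ^ κ ≤ Real.exp (-1) :=
    Real.one_sub_div_pow_le_exp_neg (by exact_mod_cast hκ)
  have hO : 0 ≤ f OPT := by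
    have := hmono ∅ OPT (Finset.empty_subset _)
    linarith
  have h6 := mul_le_mul_of_nonneg_right hexp hO
  have h7 : (κ : ℝ) * (ε / κ) = ε := mul_div_cancel₀ ε hk.ne'
  rw [h7] at hfin
  linarith
end

section
/- Let g : ℕ → ℝ satisfy g(0) = 0, let c ∈ ℝ with 0 < c ≤ 1, let V, E ∈ ℝ, and let κ be a natural number. If g(i+1) ≥ c·V + (1 − c)·g(i) − E for all i < κ, then g(κ) ≥ (1 − (1 − c)^κ) · (V − E/c). -/
/-- Real-number recursion underlying the greedy approximation guarantee:
if `g 0 = 0` and each step satisfies `g (i+1) ≥ c·V + (1-c)·g i - E`, then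
`g κ ≥ (1 - (1-c)^κ) · (V - E/c)`. -/
theorem greedy_recursion_bound
    (g : ℕ → ℝ) (hg0 : g 0 = 0)
    (c : ℝ) (hc0 : 0 < c) (hc1 : c ≤ 1)
    (V E : ℝ) (κ : ℕ)
    (hstep : ∀ i < κ, g (i + 1) ≥ c * V + (1 - c) * g i - E) :
    g κ ≥ (1 - (1 - c) ^ κ) * (V - E / c) := by
  induction κ with
  | zero => simp [hg0]
  | succ k ih =>
    have h1 := ih (fun i hi => hstep i (by omega))
    have h2 := hstep k (by omega)
    have h3 := mul_le_mul_of_nonneg_left h1 (sub_nonneg.mpr hc1)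
    have h4 : (1 - (1 - c) ^ (k + 1)) * (V - E / c)
        = c * V + (1 - c) * ((1 - (1 - c) ^ k) * (V - E / c)) - E := by
      have h5 : E = c * (E / c) := by field_simp
      rw [pow_succ]
      linear_combination h5
    linarith
end

section
/- Let U be a finite set, f : Finset U → ℝ monotone and submodular, κ ≥ 1 a natural number, OPT ⊆ U with |OPT| ≤ κ, α ∈ [0,1), ε ≥ 0, and w ∈ ℝ. Let S ⊆ U and s ∈ U satisfy Δf(S,s) ≥ w − ε, and suppose every o ∈ OPT \ S satisfies Δf(S,o) ≤ w/(1 − α) + ε. Then Δf(S,s) ≥ ((1 − α)/κ) · (f(OPT) − f(S)) − 2ε. -/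
/-- Per-step lemma for threshold greedy: an element accepted at threshold `w`
captures a `(1-α)/κ` fraction of the remaining optimum gap, up to `2ε`, given that optimal
elements not yet chosen failed the previous threshold `w/(1-α)`. -/
theorem threshold_greedy_step
    {U : Type*} [Fintype U] [DecidableEq U]
    (f : Finset U → ℝ)
    (hmono : ∀ X Y : Finset U, X ⊆ Y → f X ≤ f Y)
    (hsub : ∀ X Y : Finset U, X ⊆ Y → ∀ x ∉ Y,
      f (insert x X) - f X ≥ f (insert x Y) - f Y)
    (κ : ℕ) (hκ : 1 ≤ κ)
    (OPT : Finset U) (hOPT : OPT.card ≤ κ)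
    (α : ℝ) (hα0 : 0 ≤ α) (hα1 : α < 1)
    (ε : ℝ) (hε : 0 ≤ ε)
    (w : ℝ) (S : Finset U) (s : U)
    (hs : f (insert s S) - f S ≥ w - ε)
    (hopt : ∀ o ∈ OPT \ S, f (insert o S) - f S ≤ w / (1 - α) + ε) :
    f (insert s S) - f S ≥ ((1 - α) / κ) * (f OPT - f S) - 2 * ε := by
  have hα : 0 < 1 - α := by linarith
  have hκ' : (0 : ℝ) < κ := by exact_mod_cast hκ
  have hD : 0 ≤ f (insert s S) - f S :=
    sub_nonneg.2 (hmono _ _ (Finset.subset_insert _ _))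
  set D := f (insert s S) - f S with hDdef
  obtain ⟨B, hB⟩ : ∃ B, B = (D + ε) / (1 - α) + ε := ⟨_, rfl⟩
  have hB0 : 0 ≤ B := by rw [hB]; positivity
  have hoB : ∀ o ∈ OPT \ S, f (insert o S) - f S ≤ B := by
    intro o ho
    have h1 := hopt o ho
    have h2 : w / (1 - α) ≤ (D + ε) / (1 - α) := by
      apply div_le_div_of_nonneg_right _ hα.le
      linarith
    linarith
  have key : ∀ T : Finset U, T ⊆ OPT → f (T ∪ S) - f S ≤ T.card * B := by
    intro T
    induction T using Finset.induction_on with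
    | empty => intro _; simp
    | insert a T ha ih =>
      intro hT
      have h1 := ih ((Finset.subset_insert a T).trans hT)
      rw [Finset.card_insert_of_notMem ha, Finset.insert_union]
      push_cast
      by_cases haS : a ∈ S
      · rw [Finset.insert_eq_of_mem (Finset.mem_union_right T haS)]
        linarith
      · have h2 := hsub S (T ∪ S) Finset.subset_union_right a (by simp [ha, haS])
        have h3 := hoB a (Finset.mem_sdiff.2 ⟨hT (Finset.mem_insert_self a T), haS⟩)
        linarith
  have h1 := key OPT subset_rfl
  have h2 := hmono OPT (OPT ∪ S) Finset.subset_union_left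
  have h3 : (OPT.card : ℝ) * B ≤ κ * B :=
    mul_le_mul_of_nonneg_right (by exact_mod_cast hOPT) hB0
  have h4 : f OPT - f S ≤ κ * B := by linarith
  have h5 : ((1 - α) / κ) * (f OPT - f S) ≤ ((1 - α) / κ) * (κ * B) :=
    mul_le_mul_of_nonneg_left h4 (by positivity)
  have h6 : ((1 - α) / κ) * (κ * B) = D + ε + (1 - α) * ε := by
    rw [hB]; field_simp
  have h7 : 0 ≤ α * ε := mul_nonneg hα0 hε
  linarith
end

section
/- Let U be a finite set, f : Finset U → ℝ monotone and submodular with f(∅) = 0, κ ≥ 1 a natural number, OPT ⊆ U with |OPT| ≤ κ, α ∈ [0,1), and ε ≥ 0. Suppose S_0 = ∅ and S_0 ⊆ S_1 ⊆ ... ⊆ S_κ ⊆ U is a chain of sets satisfying f(S_{i+1}) ≥ ((1 − α)/κ)·f(OPT) + (1 − (1 − α)/κ)·f(S_i) − 2ε for all i < κ. Then f(S_κ) ≥ (1 − e^{−1} − α) · f(OPT) − 2κε. -/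
/-- Deterministic full-budget case of the threshold greedy guarantee:
a chain `∅ = S 0 ⊆ S 1 ⊆ ... ⊆ S κ` in which each step satisfies
`f (S (i+1)) ≥ ((1-α)/κ)·f OPT + (1 - (1-α)/κ)·f (S i) - 2ε` yields
`f (S κ) ≥ (1 - e⁻¹ - α)·f OPT - 2κε`. -/
theorem threshold_greedy_full_budget
    {U : Type*} [Fintype U] [DecidableEq U]
    (f : Finset U → ℝ)
    (hmono : ∀ X Y : Finset U, X ⊆ Y → f X ≤ f Y)
    (hsub : ∀ X Y : Finset U, X ⊆ Y → ∀ x ∉ Y,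
      f (insert x X) - f X ≥ f (insert x Y) - f Y)
    (hf0 : f ∅ = 0)
    (κ : ℕ) (hκ : 1 ≤ κ)
    (OPT : Finset U) (hOPT : OPT.card ≤ κ)
    (α : ℝ) (hα0 : 0 ≤ α) (hα1 : α < 1)
    (ε : ℝ) (hε : 0 ≤ ε)
    (S : ℕ → Finset U)
    (hS0 : S 0 = ∅)
    (hchain : ∀ i < κ, S i ⊆ S (i + 1))
    (hstep : ∀ i < κ, f (S (i + 1)) ≥
      ((1 - α) / κ) * f OPT + (1 - (1 - α) / κ) * f (S i) - 2 * ε) :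
    f (S κ) ≥ (1 - Real.exp (-1) - α) * f OPT - 2 * κ * ε := by
  have hF : 0 ≤ f OPT := by
    rw [← hf0]
    exact hmono _ _ (Finset.empty_subset _)
  have hk : (1 : ℝ) ≤ κ := by exact_mod_cast hκ
  have hk0 : (0 : ℝ) < κ := by linarith
  obtain ⟨c, hc⟩ : ∃ c : ℝ, c = (1 - α) / κ := ⟨_, rfl⟩
  rw [← hc] at hstep
  have hc0 : 0 ≤ c := by
    rw [hc]
    exact div_nonneg (by linarith) hk0.le
  have hc1 : c ≤ 1 := by
    rw [hc, div_le_one hk0]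
    linarith
  have hck : (κ : ℝ) * c = 1 - α := by
    rw [hc]
    field_simp
  have key : ∀ i : ℕ, i ≤ κ → (1 - (1 - c) ^ i) * f OPT - 2 * i * ε ≤ f (S i) := by
    intro i
    induction i with
    | zero => intro _; simp [hS0, hf0]
    | succ n ih =>
      intro hn
      have h1 := ih (by omega)
      have h2 := hstep n (by omega)
      have h3 := mul_le_mul_of_nonneg_left h1 (by linarith : 0 ≤ 1 - c)
      have h4 : 0 ≤ c * (n * ε) := by positivity
      rw [pow_succ]
      push_cast
      nlinarith
  have hpow : (1 - c) ^ κ ≤ Real.exp (-(1 - α)) := by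
    have h1 : 1 - c ≤ Real.exp (-c) := by
      have := Real.add_one_le_exp (-c)
      linarith
    calc (1 - c) ^ κ ≤ Real.exp (-c) ^ κ := pow_le_pow_left₀ (by linarith) h1 κ
      _ = Real.exp (-(1 - α)) := by
        rw [← Real.exp_nat_mul, ← hck]
        congr 1
        ring
  have hexp : Real.exp (-(1 - α)) ≤ Real.exp (-1) + α := by
    have h1 : Real.exp (-(1 - α)) ≤ 1 := Real.exp_le_one_iff.mpr (by linarith)
    have h2 : Real.exp (-1) = Real.exp (-(1 - α)) * Real.exp (-α) := by
      rw [← Real.exp_add]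
      congr 1
      ring
    have h3 := Real.add_one_le_exp (-α)
    have h4 := Real.exp_pos (-(1 - α))
    rw [h2]
    nlinarith
  have h := key κ le_rfl
  have h5 := mul_le_mul_of_nonneg_right (hpow.trans hexp) hF
  nlinarith
end

section
/- Let U be a nonempty finite set, f : Finset U → ℝ monotone and submodular with f(∅) = 0, κ ≥ 1 a natural number, OPT ⊆ U with |OPT| ≤ κ, α ∈ [0,1], and ε ≥ 0. Suppose f({x}) ≤ f(OPT) for all x ∈ U, and let S ⊆ U be such that every o ∈ OPT \ S satisfies Δf(S,o) ≤ (α/κ)·(max_{x ∈ U} f({x}) + ε) + ε. Then f(S) ≥ (1 − α)·f(OPT) − 2κε. -/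
/-- Threshold greedy termination case with fewer than κ elements: if every
remaining optimal element fails the final threshold `(α/κ)·(max_x f {x} + ε) + ε`, then
`f S ≥ (1-α)·f OPT - 2κε`. -/
theorem threshold_greedy_early_termination
    {U : Type*} [Fintype U] [DecidableEq U] [Nonempty U]
    (f : Finset U → ℝ)
    (hmono : ∀ X Y : Finset U, X ⊆ Y → f X ≤ f Y)
    (hsub : ∀ X Y : Finset U, X ⊆ Y → ∀ x ∉ Y,
      f (insert x X) - f X ≥ f (insert x Y) - f Y)
    (hf0 : f ∅ = 0)
    (κ : ℕ) (hκ : 1 ≤ κ)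
    (OPT : Finset U) (hOPT : OPT.card ≤ κ)
    (α : ℝ) (hα0 : 0 ≤ α) (hα1 : α ≤ 1)
    (ε : ℝ) (hε : 0 ≤ ε)
    (hsingleton : ∀ x : U, f {x} ≤ f OPT)
    (S : Finset U)
    (hfail : ∀ o ∈ OPT \ S, f (insert o S) - f S ≤
      (α / κ) * (Finset.univ.sup' Finset.univ_nonempty (fun x => f {x}) + ε) + ε) :
    f S ≥ (1 - α) * f OPT - 2 * κ * ε := by
  have hk : (1:ℝ) ≤ κ := by exact_mod_cast hκ
  have hk0 : (0:ℝ) < κ := by linarith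
  have hO : 0 ≤ f OPT := hf0 ▸ hmono ∅ OPT (Finset.empty_subset _)
  have hM : Finset.univ.sup' Finset.univ_nonempty (fun x => f {x}) ≤ f OPT :=
    Finset.sup'_le _ _ (fun x _ => hsingleton x)
  obtain ⟨B, hB⟩ : ∃ B : ℝ, B = (α / κ) * (f OPT + ε) + ε := ⟨_, rfl⟩
  have hB0 : 0 ≤ B := by rw [hB]; positivity
  have hfail' : ∀ o ∈ OPT \ S, f (insert o S) - f S ≤ B := by
    intro o ho
    refine (hfail o ho).trans ?_
    rw [hB]
    gcongr
  have key : ∀ A : Finset U, A ⊆ OPT \ S → f (A ∪ S) ≤ f S + A.card * B := by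
    intro A
    induction A using Finset.induction_on with
    | empty => intro _; simp
    | insert a A ha ih =>
      intro hA
      have h1 := ih ((Finset.subset_insert a A).trans hA)
      have haO := hA (Finset.mem_insert_self a A)
      have haS : a ∉ A ∪ S := by
        have := (Finset.mem_sdiff.1 haO).2
        simp [ha, this]
      have h2 := hsub S (A ∪ S) Finset.subset_union_right a haS
      have h3 := hfail' a haO
      rw [Finset.insert_union, Finset.card_insert_of_notMem ha]
      push_cast
      linarith
  have h1 := key (OPT \ S) subset_rfl
  have h2 : f OPT ≤ f (OPT \ S ∪ S) := by
    apply hmono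
    rw [Finset.sdiff_union_self_eq_union]
    exact Finset.subset_union_left
  have h3 : ((OPT \ S).card : ℝ) ≤ κ := by
    exact_mod_cast (Finset.card_le_card Finset.sdiff_subset).trans hOPT
  have h4 : ((OPT \ S).card : ℝ) * B ≤ κ * B := mul_le_mul_of_nonneg_right h3 hB0
  have h5 : κ * B = α * (f OPT + ε) + κ * ε := by rw [hB]; field_simp
  have h6 : α * ε ≤ κ * ε := mul_le_mul_of_nonneg_right (hα1.trans hk) hε
  linarith
end

section
/- Let x, a, b ∈ ℝ with x > 0, a > 0, and b > 0. If x ≤ a + b·log x, then x ≤ 2a + 2b·log b. -/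
/-- For `x, a, b > 0`, if `x ≤ a + b·log x` then `x ≤ 2a + 2b·log b`. -/
theorem implicit_log_bound
    (x a b : ℝ) (hx : 0 < x) (ha : 0 < a) (hb : 0 < b)
    (h : x ≤ a + b * Real.log x) :
    x ≤ 2 * a + 2 * b * Real.log b := by
  have h1 : Real.log (x / (2 * b)) ≤ x / (2 * b) - 1 :=
    Real.log_le_sub_one_of_pos (by positivity)
  rw [Real.log_div hx.ne' (by positivity), Real.log_mul (by norm_num) hb.ne'] at h1
  have h2 : Real.log 2 ≤ 2 - 1 := Real.log_le_sub_one_of_pos (by norm_num)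
  have h3 : Real.log x ≤ x / (2 * b) + Real.log b := by linarith
  have h4 := mul_le_mul_of_nonneg_left h3 hb.le
  have h5 : b * (x / (2 * b) + Real.log b) = x / 2 + b * Real.log b := by
    field_simp
  linarith
end

section
/- Let d ≥ 1 and t be natural numbers, λ > 0 and L ≥ 0 reals, and let v_1, ..., v_t ∈ ℝ^d be vectors with Euclidean norm ‖v_i‖₂ ≤ L for each i. Let A = λ·I + ∑_{i=1}^t v_i v_iᵀ be the d×d real matrix formed from the identity and the outer products v_i v_iᵀ. Then det(A) ≤ (λ + t·L²/d)^d. -/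
/-- Determinant bound for the regularized design matrix: if each vector
`v i ∈ ℝ^d` has Euclidean norm at most `L`, then
`det (λ·I + ∑ i, v i (v i)ᵀ) ≤ (λ + t·L²/d)^d`. -/
theorem det_design_matrix_bound
    (d t : ℕ) (hd : 1 ≤ d)
    (lam L : ℝ) (hlam : 0 < lam) (hL : 0 ≤ L)
    (v : Fin t → Fin d → ℝ)
    (hv : ∀ i, Real.sqrt (∑ j, (v i j) ^ 2) ≤ L)
    (A : Matrix (Fin d) (Fin d) ℝ)
    (hA : A = lam • (1 : Matrix (Fin d) (Fin d) ℝ) + ∑ i, Matrix.vecMulVec (v i) (v i)) :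
    A.det ≤ (lam + t * L ^ 2 / d) ^ d := by
  have hpsd : A.PosSemidef := by
    rw [hA]
    refine Matrix.PosSemidef.add (Matrix.PosSemidef.one.smul hlam.le) ?_
    refine Matrix.posSemidef_sum _ fun i _ => ?_
    simpa using Matrix.posSemidef_vecMulVec_self_star (v i)
  have hd0 : (0 : ℝ) < d := by exact_mod_cast hd
  have htr : A.trace ≤ d * lam + t * L ^ 2 := by
    rw [hA, Matrix.trace_add, Matrix.trace_smul, Matrix.trace_one, Matrix.trace_sum]
    have h1 : ∑ i, (Matrix.vecMulVec (v i) (v i)).trace ≤ ∑ _i : Fin t, L ^ 2 := by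
      refine Finset.sum_le_sum fun i _ => ?_
      have h2 := (Real.sqrt_le_left hL).1 (hv i)
      rw [Matrix.trace_vecMulVec]
      simpa [dotProduct, pow_two] using h2
    simp only [Finset.sum_const, Finset.card_univ, Fintype.card_fin, nsmul_eq_mul,
      smul_eq_mul] at h1 ⊢
    linarith
  have hdet := hpsd.isHermitian.det_eq_prod_eigenvalues
  have htr2 := hpsd.isHermitian.trace_eq_sum_eigenvalues
  set e := hpsd.isHermitian.eigenvalues with he
  have hnn : ∀ i, 0 ≤ e i := hpsd.eigenvalues_nonneg
  have hdet' : A.det = ∏ i, e i := by simpa using hdet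
  have htr' : A.trace = ∑ i, e i := by simpa using htr2
  have amgm := Real.geom_mean_le_arith_mean_weighted Finset.univ (fun _ : Fin d => (d : ℝ)⁻¹) e
    (fun _ _ => by positivity) (by simp [hd0.ne']) (fun i _ => hnn i)
  rw [← Finset.mul_sum, ← htr'] at amgm
  have hle : ∏ i, e i ^ ((d : ℝ)⁻¹) ≤ lam + t * L ^ 2 / d := by
    refine amgm.trans ?_
    calc (d : ℝ)⁻¹ * A.trace ≤ (d : ℝ)⁻¹ * (d * lam + t * L ^ 2) := by gcongr
      _ = lam + t * L ^ 2 / d := by field_simp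
  have hp := pow_le_pow_left₀ (Finset.prod_nonneg fun i _ => Real.rpow_nonneg (hnn i) _) hle d
  rw [← Finset.prod_pow] at hp
  rw [hdet']
  refine le_of_eq_of_le (Finset.prod_congr rfl fun i _ => ?_) hp
  exact (Real.rpow_inv_natCast_pow (hnn i) (by omega)).symm
end

section
/- Let m, d ≥ 1 be natural numbers, let x_1, ..., x_m ∈ ℝ^d, and let w_1, ..., w_m ∈ ℝ with ρ := ∑_{a=1}^m |w_a| > 0. Set y = ∑_{a=1}^m w_a x_a, p_a = |w_a|/ρ, and M = ∑_{a=1}^m p_a x_a x_aᵀ. If the d×d matrix M is invertible, then yᵀ M^{−1} y ≤ ρ². -/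
open Matrix

/-- Allocating samples proportionally to `|w a|`, where `y = ∑ w a • x a`,
makes the squared Mahalanobis norm of `y` with respect to
`M = ∑ (|w a|/ρ) • x a (x a)ᵀ` at most `ρ² = (∑ |w a|)²`. -/
theorem allocation_mahalanobis_bound
    (m d : ℕ) (hm : 1 ≤ m) (hd : 1 ≤ d)
    (x : Fin m → Fin d → ℝ)
    (w : Fin m → ℝ) (ρ : ℝ) (hρ : ρ = ∑ a, |w a|) (hρpos : 0 < ρ)
    (y : Fin d → ℝ) (hy : y = ∑ a, w a • x a)
    (p : Fin m → ℝ) (hp : ∀ a, p a = |w a| / ρ)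
    (M : Matrix (Fin d) (Fin d) ℝ)
    (hM : M = ∑ a, p a • Matrix.vecMulVec (x a) (x a))
    (hMinv : IsUnit M.det) :
    y ⬝ᵥ (M⁻¹ *ᵥ y) ≤ ρ ^ 2 := by
  obtain ⟨z, hz⟩ : ∃ z, z = M⁻¹ *ᵥ y := ⟨_, rfl⟩
  have hMz : M *ᵥ z = y := by
    rw [hz, Matrix.mulVec_mulVec, Matrix.mul_nonsing_inv _ hMinv, Matrix.one_mulVec]
  rw [← hz]
  have h1 : y ⬝ᵥ z = ∑ a, w a * (x a ⬝ᵥ z) := by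
    rw [hy, sum_dotProduct]
    simp [smul_dotProduct]
  have h2 : y ⬝ᵥ z = ∑ a, p a * (x a ⬝ᵥ z) ^ 2 := by
    rw [← hMz, hM, Matrix.sum_mulVec, sum_dotProduct]
    refine Finset.sum_congr rfl fun a _ => ?_
    rw [Matrix.smul_mulVec, Matrix.vecMulVec_mulVec, smul_dotProduct]
    simp only [op_smul_eq_smul, smul_dotProduct, smul_eq_mul]
    ring
  have h3 : ∑ a, w a * (x a ⬝ᵥ z) ≤
      ∑ a, (p a * (x a ⬝ᵥ z) ^ 2 / 2 + |w a| * (ρ / 2)) := by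
    refine Finset.sum_le_sum fun a _ => ?_
    have hw : |w a| = p a * ρ := by rw [hp]; field_simp
    have hp0 : 0 ≤ p a := by rw [hp]; positivity
    have h4 : w a * (x a ⬝ᵥ z) ≤ |w a| * |x a ⬝ᵥ z| := by
      rw [← abs_mul]; exact le_abs_self _
    rw [hw] at h4 ⊢
    have h5 := mul_nonneg hp0 (sq_nonneg (|x a ⬝ᵥ z| - ρ))
    rw [← sq_abs (x a ⬝ᵥ z)]
    linarith
  rw [Finset.sum_add_distrib, ← Finset.sum_div, ← Finset.sum_mul, ← hρ, ← h1, ← h2] at h3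
  linarith
end
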